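/- arXiv:2508.09082 — 2 statements merged into one kernel-verified Lean document; each statement's English description precedes it below -/
import Mathlib

section
/- Let n ≥ 1, let f(x) ∈ 𝔽₂[x] divide xⁿ−1 with deg f ≥ 1, and let p(x) ∈ 𝔽₂[x] satisfy gcd(p(x), xⁿ−1) = 1, with inverse p⁻¹ in R = 𝔽₂[x]/(xⁿ−1). Let h(x) = (xⁿ−1)/f(x) and suppose r, s ∈ 𝔽₂[x] satisfy r + p·s ≡ h (mod xⁿ−1), where s is not of the form t·f in R for any t ∈ R. Then, with a = f and b = p·f (images in R): (1, p) ∈ C₁(a,b) \ C₂(a,b) with weight wt(p)+1; (p⁻¹, 1) ∈ C₁(a,b) \ C₂(a,b) with weight wt(p⁻¹)+1; and (s, r) ∈ C₁(a,b) \ C₂(a,b) with weight wt(s)+wt(r). Consequently d_GB(a,b) ≤ min{wt(p)+1, wt(p⁻¹)+1, wt(s)+wt(r)}. -/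
open Polynomial

noncomputable section

/-- `R2 n` is the ring `𝔽₂[x]/(xⁿ − 1)`. -/
abbrev R2 (n : ℕ) : Type := AdjoinRoot (X ^ n - 1 : (ZMod 2)[X])

/-- The image of `x` in `𝔽₂[x]/(xⁿ − 1)`. -/
def xR (n : ℕ) : R2 n := AdjoinRoot.root _

/-- The quotient map `𝔽₂[x] → 𝔽₂[x]/(xⁿ − 1)`. -/
def mkR (n : ℕ) : (ZMod 2)[X] →+* R2 n := AdjoinRoot.mk _

lemma xR_pow_n (n : ℕ) : xR n ^ n = 1 := by
  have h : (AdjoinRoot.mk (X ^ n - 1 : (ZMod 2)[X])) (X ^ n - 1) = 0 := AdjoinRoot.mk_self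
  rw [map_sub, map_pow, AdjoinRoot.mk_X, map_one, sub_eq_zero] at h
  exact h

/-- The unique representative of degree `< n` of an element of `𝔽₂[x]/(xⁿ − 1)` (junk if `n = 0`). -/
def repP {n : ℕ} (u : R2 n) : (ZMod 2)[X] :=
  if h : n = 0 then 0
  else AdjoinRoot.modByMonicHom (by simpa using monic_X_pow_sub_C (1 : ZMod 2) h) u

/-- The Hamming weight of an element of `𝔽₂[x]/(xⁿ − 1)`: the number of nonzero coefficients
of its degree-`< n` representative. -/
def wt {n : ℕ} (u : R2 n) : ℕ := (repP u).support.card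

/-- Coefficient of the degree-`< n` representative, indexed by `ℤ/n`. -/
def coeffZ {n : ℕ} (u : R2 n) (i : ZMod n) : ZMod 2 := (repP u).coeff i.val

/-- The X-stabilizer space `C₂(a,b) = {(r·a, r·b) : r ∈ R}` of the GB code of `(a,b)`. -/
def C2set (n : ℕ) (a b : R2 n) : Set (R2 n × R2 n) := {p | ∃ r : R2 n, p = (r * a, r * b)}

/-- The space `C₁(a,b) = {(u,v) : u·b + v·a = 0}` of the GB code of `(a,b)`. -/
def C1set (n : ℕ) (a b : R2 n) : Set (R2 n × R2 n) := {p | p.1 * b + p.2 * a = 0}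

/-- The (X-side) minimum distance of the GB code of `(a,b)`. -/
def dGB (n : ℕ) (a b : R2 n) : ℕ :=
  sInf {k | ∃ p ∈ C1set n a b \ C2set n a b, wt p.1 + wt p.2 = k}

/-- `P_m(x) = 1 + x + ⋯ + x^{m−1}` as a polynomial over `𝔽₂`. -/
def PmP (m : ℕ) : (ZMod 2)[X] := ∑ i ∈ Finset.range m, X ^ i

/-- `P_m(x) = 1 + x + ⋯ + x^{m−1}` as an element of `𝔽₂[x]/(xⁿ − 1)`. -/
def PmR (n m : ℕ) : R2 n := ∑ i ∈ Finset.range m, xR n ^ i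

/-- The ring endomorphism of `𝔽₂[x]/(xⁿ − 1)` induced by `x ↦ x^d`. -/
def substHom (n d : ℕ) : R2 n →+* R2 n :=
  AdjoinRoot.lift (algebraMap (ZMod 2) (R2 n)) (xR n ^ d) (by
    simp only [eval₂_sub, eval₂_X_pow, eval₂_one]
    rw [← pow_mul, mul_comm d n, pow_mul, xR_pow_n, one_pow, sub_self])

/-- The Euclidean inner product on `𝔽₂²ⁿ`, in terms of pairs `(u₁, u₂)` of elements of
`𝔽₂[x]/(xⁿ − 1)` (representing the concatenated binary vector `(u₁ | u₂)`). -/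
def eucInner (n : ℕ) (p q : R2 n × R2 n) : ZMod 2 :=
  ∑ i ∈ Finset.range n,
    ((repP p.1).coeff i * (repP q.1).coeff i + (repP p.2).coeff i * (repP q.2).coeff i)

/-- The symplectic inner product of `u₁ + w·u₂` and `v₁ + w·v₂`, i.e.
`Σᵢ (u₁ᵢ·v₂ᵢ + u₂ᵢ·v₁ᵢ)`, in terms of the pairs `(u₁,u₂)`, `(v₁,v₂)`. -/
def sympInner (n : ℕ) (p q : R2 n × R2 n) : ZMod 2 :=
  ∑ i ∈ Finset.range n,
    ((repP p.1).coeff i * (repP q.2).coeff i + (repP p.2).coeff i * (repP q.1).coeff i)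

/-- Euclidean dual of a set of (pairs representing) binary vectors of length `2n`. -/
def eucDual (n : ℕ) (S : Set (R2 n × R2 n)) : Set (R2 n × R2 n) :=
  {p | ∀ q ∈ S, eucInner n q p = 0}

/-- Symplectic dual of a set of (pairs representing) vectors of `𝔽₄ⁿ`. -/
def sympDual (n : ℕ) (S : Set (R2 n × R2 n)) : Set (R2 n × R2 n) :=
  {p | ∀ q ∈ S, sympInner n q p = 0}

/-- Number of nonzero `𝔽₄`-coordinates of `u₁ + w·u₂`, in terms of the pair `(u₁,u₂)`. -/
def wt4 (n : ℕ) (p : R2 n × R2 n) : ℕ := ((repP p.1).support ∪ (repP p.2).support).card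

/-- The `2n` binary coordinates of a pair `(u₁,u₂)`. -/
def coords {n : ℕ} (p : R2 n × R2 n) : (Fin n ⊕ Fin n) → ZMod 2 :=
  Sum.elim (fun i => (repP p.1).coeff i) (fun i => (repP p.2).coeff i)

/-- Vertex set of the Tanner graph: check vertices `x_t` (left) and data vertices
`q_s`, `q'_s` (right). -/
def TV (n : ℕ) : Type := (ZMod n) ⊕ ((ZMod n) ⊕ (ZMod n))

/-- `trel a b v w` holds iff `v` is a check vertex `x_t`, `w` is a data vertex, and they are
connected: `x_t ~ q_s` iff `a_{s−t} = 1`, and `x_t ~ q'_s` iff `b_{s−t} = 1`. -/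
def trel {n : ℕ} (a b : R2 n) (v w : TV n) : Prop :=
  ∃ t s : ZMod n, v = Sum.inl t ∧
    ((w = Sum.inr (Sum.inl s) ∧ coeffZ a (s - t) = 1) ∨
     (w = Sum.inr (Sum.inr s) ∧ coeffZ b (s - t) = 1))

/-- The Tanner graph `T(a,b)` of the GB code of `(a,b)`. -/
def tanner (n : ℕ) (a b : R2 n) : SimpleGraph (TV n) where
  Adj v w := trel a b v w ∨ trel a b w v
  symm := ⟨fun v w h => Or.symm h⟩
  loopless := by
    constructor
    rintro v (⟨t, s, hv, hw⟩ | ⟨t, s, hv, hw⟩) <;>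
      rcases hw with ⟨hw, -⟩ | ⟨hw, -⟩ <;> (subst hv; simp at hw)

end

noncomputable section

/-- A divisor of `xⁿ − 1` of positive degree does not become a unit in `𝔽₂[x]/(xⁿ − 1)`. -/
lemma mul_mkR_ne_one {n : ℕ} {f : (ZMod 2)[X]} (hf : f ∣ (X ^ n - 1 : (ZMod 2)[X]))
    (hdeg : 1 ≤ f.natDegree) (t : R2 n) : t * mkR n f ≠ 1 := by
  obtain ⟨t, rfl⟩ := AdjoinRoot.mk_surjective t
  intro ht
  have hdvd : (X ^ n - 1 : (ZMod 2)[X]) ∣ t * f - 1 := by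
    rw [← AdjoinRoot.mk_eq_mk, map_mul, map_one]
    exact ht
  have hunit : IsUnit f :=
    isUnit_of_dvd_one ((dvd_sub_right (dvd_mul_left f t)).mp (hf.trans hdvd))
  have := natDegree_eq_zero_of_isUnit hunit
  omega

lemma add_self_R2 {n : ℕ} (u : R2 n) : u + u = 0 := by
  obtain ⟨u, rfl⟩ := AdjoinRoot.mk_surjective u
  rw [← map_add, CharTwo.add_self_eq_zero, map_zero]

lemma wt_one {n : ℕ} (hn : 0 < n) : wt (1 : R2 n) = 1 := by
  have hmonic : (X ^ n - 1 : (ZMod 2)[X]).Monic := by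
    simpa using monic_X_pow_sub_C (1 : ZMod 2) hn.ne'
  have hdegree : (1 : (ZMod 2)[X]).degree < (X ^ n - 1 : (ZMod 2)[X]).degree := by
    have := degree_X_pow_sub_C hn (1 : ZMod 2)
    rw [map_one] at this
    rw [this, degree_one]
    exact_mod_cast hn
  have hrep : repP (1 : R2 n) = 1 := by
    rw [repP, dif_neg hn.ne', ← map_one (AdjoinRoot.mk _), AdjoinRoot.modByMonicHom_mk,
      (modByMonic_eq_self_iff hmonic).mpr hdegree]
  rw [wt, hrep, ← C_1, support_C one_ne_zero, Finset.card_singleton]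

lemma dGB_le {n : ℕ} {a b u v : R2 n} (huv : (u, v) ∈ C1set n a b \ C2set n a b) :
    dGB n a b ≤ wt u + wt v :=
  Nat.sInf_le ⟨(u, v), huv, rfl⟩

/-- Upper bound on the minimum distance of the GB code of `(f, p·f)`,
where `f ∣ xⁿ−1` with `deg f ≥ 1`, `gcd(p, xⁿ−1) = 1` with inverse `pinv` in `R`,
`h = (xⁿ−1)/f`, and `r + p·s ≡ h (mod xⁿ−1)` with `s` not of the form `t·f` in `R`:
`(1, p)`, `(p⁻¹, 1)` and `(s, r)` all lie in `C₁ \ C₂`, with weights `wt(p)+1`,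
`wt(p⁻¹)+1` and `wt(s)+wt(r)` respectively; consequently
`d_GB ≤ min{wt(p)+1, wt(p⁻¹)+1, wt(s)+wt(r)}`. -/
theorem stmt_5 (n : ℕ) (hn : 0 < n) (f p h : (ZMod 2)[X])
    (hf : f ∣ (X ^ n - 1 : (ZMod 2)[X])) (hdeg : 1 ≤ f.natDegree)
    (hp : EuclideanDomain.gcd p (X ^ n - 1 : (ZMod 2)[X]) = 1)
    (pinv : R2 n) (hpinv : mkR n p * pinv = 1)
    (hh : f * h = X ^ n - 1)
    (r s : (ZMod 2)[X])
    (hrs : mkR n r + mkR n p * mkR n s = mkR n h)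
    (hs : ∀ t : R2 n, mkR n s ≠ t * mkR n f)
    (a b : R2 n) (ha : a = mkR n f) (hb : b = mkR n (p * f)) :
    (((1 : R2 n), mkR n p) ∈ C1set n a b \ C2set n a b ∧
      wt (1 : R2 n) + wt (mkR n p) = wt (mkR n p) + 1) ∧
    ((pinv, (1 : R2 n)) ∈ C1set n a b \ C2set n a b ∧
      wt pinv + wt (1 : R2 n) = wt pinv + 1) ∧
    (mkR n s, mkR n r) ∈ C1set n a b \ C2set n a b ∧
    dGB n a b ≤ min (wt (mkR n p) + 1) (min (wt pinv + 1) (wt (mkR n s) + wt (mkR n r))) := by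
  subst ha hb
  have hfh : mkR n f * mkR n h = 0 := by
    rw [← map_mul, hh]
    exact AdjoinRoot.mk_self
  have h1p : ((1 : R2 n), mkR n p) ∈ C1set n (mkR n f) (mkR n (p * f)) \
      C2set n (mkR n f) (mkR n (p * f)) := by
    refine ⟨?_, ?_⟩
    · change 1 * mkR n (p * f) + mkR n p * mkR n f = 0
      rw [one_mul, map_mul, add_self_R2]
    · rintro ⟨t, ht⟩
      exact mul_mkR_ne_one hf hdeg t (congrArg Prod.fst ht).symm
  have hp1 : (pinv, (1 : R2 n)) ∈ C1set n (mkR n f) (mkR n (p * f)) \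
      C2set n (mkR n f) (mkR n (p * f)) := by
    refine ⟨?_, ?_⟩
    · change pinv * mkR n (p * f) + 1 * mkR n f = 0
      rw [map_mul, ← mul_assoc, mul_comm pinv, hpinv, add_self_R2]
    · rintro ⟨t, ht⟩
      refine mul_mkR_ne_one hf hdeg (t * mkR n p) ?_
      rw [mul_assoc, ← map_mul]
      exact (congrArg Prod.snd ht).symm
  have hsr : (mkR n s, mkR n r) ∈ C1set n (mkR n f) (mkR n (p * f)) \
      C2set n (mkR n f) (mkR n (p * f)) := by
    refine ⟨?_, ?_⟩
    · change mkR n s * mkR n (p * f) + mkR n r * mkR n f = 0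
      rw [map_mul]
      linear_combination mkR n f * hrs + hfh
    · rintro ⟨t, ht⟩
      exact hs t (congrArg Prod.fst ht)
  have hw1 : wt (1 : R2 n) + wt (mkR n p) = wt (mkR n p) + 1 := by rw [wt_one hn, add_comm]
  have hw2 : wt pinv + wt (1 : R2 n) = wt pinv + 1 := by rw [wt_one hn]
  exact ⟨⟨h1p, hw1⟩, ⟨hp1, hw2⟩, hsr,
    le_min (hw1 ▸ dGB_le h1p) (le_min (hw2 ▸ dGB_le hp1) (dGB_le hsr))⟩

end
end

section
/- Let d ≥ 3 be odd, n = (d²+1)/2, and in R = 𝔽₂[x]/(xⁿ−1) set a = 1+x and b = (1+x)·P_d(x). Put u(x) = 1 + x^d + x^{2d} + ⋯ + x^{d·((d−1)/2 − 1)} and v(x) = x^{n−(d+1)/2} + x^{n−(d+1)/2 + 1} + ⋯ + x^{n−1}. Then: (i) (u, v) ∈ C₁(a,b) \ C₂(a,b) and wt(u) + wt(v) = d; (ii) (x·v(x^d), u(x^d)) ∈ C₁(a,b) \ C₂(a,b) and has weight d, where f(x^d) denotes the image of f under the ring endomorphism of R induced by x ↦ x^d; (iii) (u, v) + (x·v(x^d),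 u(x^d)) ∉ C₂(a,b), so the operators in (i) and (ii) represent distinct nontrivial logical classes; (iv) (1, P_d(x)) ∈ C₁(a,b) \ C₂(a,b) and has weight d+1. Moreover every element of C₁(a,b) \ C₂(a,b) has weight at least d, so the operators in (i) and (ii) have minimum possible weight. -/
open Polynomial

noncomputable section

/-- Every finite graph (edges indexed by `s`, with endpoints `g e` and `h e`) all of whose degrees
are even has an orientation for which the total displacement vanishes. -/
lemma exists_balanced_orientation {ι G : Type*} [DecidableEq ι] [AddCommGroup G] :
    ∀ (k : ℕ) (s : Finset ι), s.card = k → ∀ (g h : ι → G),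
      (∀ f : G → ZMod 2, ∑ e ∈ s, (f (g e) + f (h e)) = 0) →
      ∃ ε : ι → ℤ, (∀ e, ε e = 1 ∨ ε e = -1) ∧ ∑ e ∈ s, ε e • (h e - g e) = 0 := by
  classical
  intro k
  induction k with
  | zero =>
    intro s hs g h _
    rw [Finset.card_eq_zero] at hs
    exact ⟨fun _ => 1, fun _ => Or.inl rfl, by simp [hs]⟩
  | succ k ih =>
    intro s hs g h hf
    obtain ⟨e, he⟩ : s.Nonempty := Finset.card_pos.mp (by omega)
    have hcard : (s.erase e).card = k := by rw [Finset.card_erase_of_mem he]; omega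
    have hsplit : ∀ f : G → ZMod 2,
        (f (g e) + f (h e)) + ∑ i ∈ s.erase e, (f (g i) + f (h i)) = 0 := fun f => by
      rw [Finset.add_sum_erase s (fun i => f (g i) + f (h i)) he]; exact hf f
    by_cases hgh : g e = h e
    · obtain ⟨ε, hε, hsum⟩ := ih (s.erase e) hcard g h (fun f => by
        have := hsplit f
        rwa [hgh, CharTwo.add_self_eq_zero, zero_add] at this)
      refine ⟨ε, hε, ?_⟩
      rw [← Finset.add_sum_erase s _ he, hsum, hgh]
      simp
    obtain ⟨j, hj, hadj⟩ : ∃ j ∈ s.erase e, g j = h e ∨ h j = h e := by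
      by_contra! hcon
      have h1 := hsplit (fun x => if x = h e then 1 else 0)
      rw [Finset.sum_eq_zero (fun i hi => by
        rw [if_neg (hcon i hi).1, if_neg (hcon i hi).2, add_zero])] at h1
      simp [hgh] at h1
    have hne : j ≠ e := Finset.ne_of_mem_erase hj
    -- The point `p` is the endpoint of `j` glued to `e`, and `σ` the sign of `j` relative to `e`
    obtain ⟨p, σ, hσ, hp, hdisp⟩ : ∃ (p : G) (σ : ℤ), (σ = 1 ∨ σ = -1) ∧
        (∀ f : G → ZMod 2, f (g j) + f (h j) = f (h e) + f p) ∧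
        σ • (h j - g j) = p - h e := by
      rcases hadj with hadj | hadj
      · exact ⟨h j, 1, Or.inl rfl, fun f => by rw [hadj], by rw [hadj, one_smul]⟩
      · exact ⟨g j, -1, Or.inr rfl, fun f => by rw [hadj, add_comm],
          by rw [hadj, neg_smul, one_smul, neg_sub]⟩
    have hrest : ∀ i ∈ (s.erase e).erase j, i ≠ e ∧ i ≠ j := fun i hi =>
      ⟨Finset.ne_of_mem_erase (Finset.mem_of_mem_erase hi), Finset.ne_of_mem_erase hi⟩
    have heq : s.erase j = insert e ((s.erase e).erase j) := by
      rw [Finset.erase_right_comm, Finset.insert_erase]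
      exact Finset.mem_erase.mpr ⟨hne.symm, he⟩
    have hnot : e ∉ (s.erase e).erase j := fun hi => (hrest e hi).1 rfl
    obtain ⟨ε, hε, hsum⟩ := ih (s.erase j)
      (by rw [Finset.card_erase_of_mem (Finset.mem_of_mem_erase hj)]; omega)
      g (Function.update h e p) (fun f => by
        rw [heq, Finset.sum_insert hnot, Function.update_self,
          Finset.sum_congr rfl (g := fun i => f (g i) + f (h i)) (fun i hi => by
            rw [Function.update_of_ne (hrest i hi).1])]
        have h1 := hsplit f
        rw [← Finset.add_sum_erase _ _ hj, hp f] at h1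
        have h2 := CharTwo.add_self_eq_zero (f (h e))
        linear_combination h1 - h2)
    refine ⟨Function.update ε j (ε e * σ), fun i => ?_, ?_⟩
    · by_cases hi : i = j
      · subst hi
        rw [Function.update_self]
        rcases hε e with h1 | h1 <;> rcases hσ with h2 | h2 <;> simp [h1, h2]
      · rw [Function.update_of_ne hi]; exact hε i
    · rw [heq, Finset.sum_insert hnot, Function.update_self,
        Finset.sum_congr rfl (g := fun i => ε i • (h i - g i)) (fun i hi => by
          rw [Function.update_of_ne (hrest i hi).1])] at hsum
      rw [← Finset.add_sum_erase _ _ he, ← Finset.add_sum_erase _ _ hj, Function.update_self,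
        Function.update_of_ne hne.symm,
        Finset.sum_congr rfl (g := fun i => ε i • (h i - g i)) (fun i hi => by
          rw [Function.update_of_ne (hrest i hi).2]), ← hsum, mul_smul, hdisp, ← add_assoc,
        ← smul_add]
      congr 2
      abel

/-- The lattice `{(s, t) : n ∣ d s + t}`, where `2n = d² + 1`, has `ℓ¹`-minimum at least `d`. -/
lemma eq_zero_of_dvd_of_abs_add_abs_lt {d n s t : ℤ} (hd : Odd d) (hd3 : 3 ≤ d)
    (hn : 2 * n = d ^ 2 + 1) (hdvd : n ∣ d * s + t) (hlt : |s| + |t| < d) : s = 0 ∧ t = 0 := by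
  obtain ⟨α, hα⟩ := hdvd
  have hnpos : 0 < n := by nlinarith
  obtain ⟨β, hβ⟩ : ∃ β, d * t - s = n * β := ⟨d * α - 2 * s, by linear_combination d * hα + s * hn⟩
  have hs : 2 * s = d * α - β := by
    apply mul_left_cancel₀ hnpos.ne'
    linear_combination d * hα - hβ + s * hn
  have ht : 2 * t = α + d * β := by
    apply mul_left_cancel₀ hnpos.ne'
    linear_combination hα + d * hβ + t * hn
  have hnorm : n * (α ^ 2 + β ^ 2) = 2 * (s ^ 2 + t ^ 2) := by
    apply mul_left_cancel₀ hnpos.ne'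
    linear_combination (-(d * s + t) - n * α) * hα + (-(d * t - s) - n * β) * hβ
      - (s ^ 2 + t ^ 2) * hn
  have hle : s ^ 2 + t ^ 2 ≤ (d - 1) ^ 2 := by
    have h1 := abs_nonneg s
    have h2 := abs_nonneg t
    rw [← sq_abs s, ← sq_abs t]
    nlinarith
  have hsmall : α ^ 2 + β ^ 2 < 4 := by nlinarith
  have hα1 : -1 ≤ α ∧ α ≤ 1 := ⟨by nlinarith, by nlinarith⟩
  have hβ1 : -1 ≤ β ∧ β ≤ 1 := ⟨by nlinarith, by nlinarith⟩
  obtain ⟨hα0, hα1⟩ := hα1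
  obtain ⟨hβ0, hβ1⟩ := hβ1
  obtain ⟨m, rfl⟩ := hd
  have h1 := le_abs_self s
  have h2 := neg_le_abs s
  have h3 := le_abs_self t
  have h4 := neg_le_abs t
  clear hnorm hle hsmall hα hβ hn
  interval_cases α <;> interval_cases β <;> omega

lemma monic_X_pow_sub_one {n : ℕ} (hn : n ≠ 0) : (X ^ n - 1 : (ZMod 2)[X]).Monic := by
  simpa using monic_X_pow_sub_C (1 : ZMod 2) hn

lemma repP_eq {n : ℕ} (hn : n ≠ 0) (u : R2 n) :
    repP u = AdjoinRoot.modByMonicHom (monic_X_pow_sub_one hn) u := by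
  simp [repP, hn]

lemma repP_add {n : ℕ} (hn : n ≠ 0) (u v : R2 n) : repP (u + v) = repP u + repP v := by
  simp [repP_eq hn]

lemma mkR_repP {n : ℕ} (hn : n ≠ 0) (u : R2 n) : mkR n (repP u) = u := by
  rw [repP_eq hn]
  exact AdjoinRoot.mk_leftInverse (monic_X_pow_sub_one hn) u

lemma mkR_X (n : ℕ) : mkR n X = xR n := AdjoinRoot.mk_X

lemma repP_xR_pow {n : ℕ} (hn : n ≠ 0) (e : ℕ) : repP (xR n ^ e) = X ^ (e % n) := by
  rw [pow_eq_pow_mod e (xR_pow_n n), repP_eq hn, ← mkR_X, ← map_pow]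
  refine (AdjoinRoot.modByMonicHom_mk (monic_X_pow_sub_one hn) _).trans ?_
  rw [modByMonic_eq_self_iff (monic_X_pow_sub_one hn), degree_X_pow,
    show (X ^ n - 1 : (ZMod 2)[X]) = X ^ n - C 1 by simp,
    degree_X_pow_sub_C (Nat.pos_of_ne_zero hn)]
  exact_mod_cast Nat.mod_lt e (Nat.pos_of_ne_zero hn)

/-- An element of `R2 n` is the sum of the monomials in its support. -/
lemma eq_sum_support {n : ℕ} (hn : n ≠ 0) (u : R2 n) :
    u = ∑ i ∈ (repP u).support, xR n ^ i := by
  conv_lhs => rw [← mkR_repP hn u, (repP u).as_sum_support, map_sum]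
  refine Finset.sum_congr rfl fun i hi => ?_
  have hone : ∀ c : ZMod 2, c ≠ 0 → c = 1 := by decide
  have h1 : (repP u).coeff i = 1 := hone _ (mem_support_iff.mp hi)
  rw [h1, monomial_one_right_eq_X_pow, map_pow, mkR_X]

/-- The weight of a sum of distinct monomials is the number of monomials. -/
lemma wt_sum_xR_pow {n : ℕ} (hn : n ≠ 0) (s : Finset ℕ) (e : ℕ → ℕ)
    (he : Set.InjOn (fun i => e i % n) s) : wt (∑ i ∈ s, xR n ^ e i) = s.card := by
  have hrep : repP (∑ i ∈ s, xR n ^ e i) = ∑ i ∈ s.image (fun i => e i % n), X ^ i := by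
    rw [Finset.sum_image he]
    have := map_sum (AddMonoidHom.mk' (repP : R2 n → (ZMod 2)[X]) (repP_add hn))
      (fun i => xR n ^ e i) s
    simp only [AddMonoidHom.mk'_apply, repP_xR_pow hn] at this
    exact this
  have hsupp : (repP (∑ i ∈ s, xR n ^ e i)).support = s.image (fun i => e i % n) := by
    ext j
    rw [hrep, mem_support_iff, finsetSum_coeff]
    simp [coeff_X_pow]
  rw [wt, hsupp, Finset.card_image_of_injOn he]

/-- The additive functional on `R2 n` with prescribed values on the monomials. -/
def monomialFunctional {n : ℕ} (hn : n ≠ 0) (f : ZMod n → ZMod 2) : R2 n →+ ZMod 2 :=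
  AddMonoidHom.mk' (fun u => ∑ i ∈ Finset.range n, (repP u).coeff i * f i) (fun u v => by
    simp [repP_add hn, add_mul, Finset.sum_add_distrib])

lemma monomialFunctional_xR_pow {n : ℕ} (hn : n ≠ 0) (f : ZMod n → ZMod 2) (e : ℕ) :
    monomialFunctional hn f (xR n ^ e) = f e := by
  have hlt : e % n < n := Nat.mod_lt e (Nat.pos_of_ne_zero hn)
  simp [monomialFunctional, repP_xR_pow hn, coeff_X_pow, hlt]

/-- The augmentation `x ↦ 1`. -/
def augR (n : ℕ) : R2 n →+* ZMod 2 :=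
  AdjoinRoot.lift (RingHom.id (ZMod 2)) 1 (by simp)

lemma augR_xR (n : ℕ) : augR n (xR n) = 1 := AdjoinRoot.lift_root _

lemma augR_eq_wt {n : ℕ} (hn : n ≠ 0) (u : R2 n) : augR n u = (wt u : ZMod 2) := by
  conv_lhs => rw [eq_sum_support hn u]
  simp [augR_xR, wt]

lemma substHom_xR (n d : ℕ) : substHom n d (xR n) = xR n ^ d := AdjoinRoot.lift_root _

lemma augR_substHom (n d : ℕ) (u : R2 n) : augR n (substHom n d u) = augR n u := by
  have : (augR n).comp (substHom n d) = augR n := by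
    refine AdjoinRoot.ringHom_ext (RingHom.ext fun c => ?_) ?_
    · simp [Subsingleton.elim _ (RingHom.id (ZMod 2))]
    · change augR n (substHom n d (xR n)) = augR n (xR n)
      rw [substHom_xR, map_pow, augR_xR, one_pow]
  exact RingHom.congr_fun this u

lemma two_eq_zero_R2 (n : ℕ) : (2 : R2 n) = 0 := by
  rw [← map_ofNat (algebraMap (ZMod 2) (R2 n)) 2, show (OfNat.ofNat 2 : ZMod 2) = 0 from rfl,
    map_zero]

lemma exists_eq_mul_of_augR_eq_zero {n : ℕ} {u : R2 n} (hu : augR n u = 0) :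
    ∃ r, u = r * (1 + xR n) := by
  obtain ⟨p, rfl⟩ := AdjoinRoot.mk_surjective u
  have hp : p.IsRoot 1 := by
    rw [augR, AdjoinRoot.lift_mk] at hu
    simpa [eval₂_id] using hu
  obtain ⟨q, rfl⟩ := dvd_iff_isRoot.mpr hp
  refine ⟨mkR n q, ?_⟩
  change mkR n _ = _
  rw [map_mul, map_sub, mkR_X, map_one, map_one]
  linear_combination (-(mkR n q)) * two_eq_zero_R2 n

lemma eq_zero_of_sq_eq_zero {n : ℕ} (hn : Odd n) {z : R2 n} (hz : z ^ 2 = 0) : z = 0 := by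
  obtain ⟨p, rfl⟩ := AdjoinRoot.mk_surjective z
  have hsep : (X ^ n - 1 : (ZMod 2)[X]).Separable := by
    rw [X_pow_sub_one_separable_iff, ne_eq, ZMod.natCast_eq_zero_iff_even, Nat.not_even_iff_odd]
    exact hn
  rw [← map_pow, AdjoinRoot.mk_eq_zero] at hz
  rw [AdjoinRoot.mk_eq_zero]
  exact hsep.squarefree.isRadical 2 p hz

lemma mul_PmR (n d : ℕ) : (1 + xR n) * PmR n d = 1 + xR n ^ d := by
  have h := mul_geom_sum (xR n) d
  rw [PmR]
  linear_combination h + (∑ i ∈ Finset.range d, xR n ^ i - 1) * two_eq_zero_R2 n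

lemma augR_eq_zero_of_mem_C2set {n : ℕ} {c : R2 n} {p : R2 n × R2 n}
    (hp : p ∈ C2set n (1 + xR n) ((1 + xR n) * c)) : augR n p.1 = 0 ∧ augR n p.2 = 0 := by
  obtain ⟨r, rfl⟩ := hp
  have h : (1 : ZMod 2) + 1 = 0 := rfl
  simp [augR_xR, h]

lemma mem_C2set_of_augR_eq_zero {n : ℕ} (hn : Odd n) {c : R2 n} {p : R2 n × R2 n}
    (hp : p ∈ C1set n (1 + xR n) ((1 + xR n) * c)) (h1 : augR n p.1 = 0) (h2 : augR n p.2 = 0) :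
    p ∈ C2set n (1 + xR n) ((1 + xR n) * c) := by
  obtain ⟨u, v⟩ := p
  obtain ⟨r, hr⟩ := exists_eq_mul_of_augR_eq_zero h1
  change u * _ + v * _ = 0 at hp
  obtain ⟨y, hy⟩ := exists_eq_mul_of_augR_eq_zero (u := v + u * c) (by simp_all)
  have hz : v + u * c = 0 := by
    apply eq_zero_of_sq_eq_zero hn
    linear_combination (v + u * c) * hy + y * hp
  refine ⟨r, Prod.ext hr ?_⟩
  dsimp only at hr ⊢
  linear_combination hz + c * hr - u * c * two_eq_zero_R2 n

/-- A `C₁`-word of weight less than `d` has both components of even weight. -/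
lemma augR_eq_zero_of_wt_lt {d n : ℕ} (hd : Odd d) (hd3 : 3 ≤ d) (hn : 2 * n = d ^ 2 + 1)
    {u v : R2 n} (huv : u * (1 + xR n ^ d) + v * (1 + xR n) = 0) (hlt : wt u + wt v < d) :
    augR n u = 0 ∧ augR n v = 0 := by
  have hn0 : n ≠ 0 := by rintro rfl; omega
  let g : ℕ ⊕ ℕ → ZMod n := Sum.elim (fun i => i) (fun i => i)
  let h : ℕ ⊕ ℕ → ZMod n := Sum.elim (fun i => ((i + d : ℕ) : ZMod n)) (fun i => ((i + 1 : ℕ)))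
  obtain ⟨ε, hε, hsum⟩ := exists_balanced_orientation _
    ((repP u).support.disjSum (repP v).support) rfl g h (fun f => by
      have h1 := congrArg (monomialFunctional hn0 f) huv
      conv_lhs at h1 => rw [eq_sum_support hn0 u, eq_sum_support hn0 v]
      simp only [Finset.sum_mul, mul_add, mul_one, ← pow_add, ← pow_succ, map_add, map_sum,
        monomialFunctional_xR_pow, map_zero] at h1
      rw [Finset.sum_disjSum]
      simpa [g, h, Finset.sum_add_distrib] using h1)
  rw [Finset.sum_disjSum] at hsum
  have key : ∀ (w : R2 n) (η : ℕ → ℤ), (∀ i, η i = 1 ∨ η i = -1) →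
      |∑ i ∈ (repP w).support, η i| ≤ wt w ∧
        ((∑ i ∈ (repP w).support, η i : ℤ) : ZMod 2) = augR n w := by
    intro w η hη
    constructor
    · refine (Finset.abs_sum_le_sum_abs _ _).trans ?_
      rw [Finset.sum_congr rfl (g := fun _ => (1 : ℤ)) (fun i _ => by
        rcases hη i with h | h <;> simp [h])]
      simp [wt]
    · rw [augR_eq_wt hn0, wt, Int.cast_sum,
        Finset.sum_congr rfl (g := fun _ => (1 : ZMod 2)) (fun i _ => by
          rcases hη i with h | h <;> simp [h])]
      simp
  obtain ⟨hu1, hu2⟩ := key u (fun i => ε (Sum.inl i)) (fun i => hε _)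
  obtain ⟨hv1, hv2⟩ := key v (fun i => ε (Sum.inr i)) (fun i => hε _)
  set s := ∑ i ∈ (repP u).support, ε (Sum.inl i)
  set t := ∑ i ∈ (repP v).support, ε (Sum.inr i)
  have hdvd : (n : ℤ) ∣ d * s + t := by
    rw [← ZMod.intCast_zmod_eq_zero_iff_dvd, ← hsum]
    simp [g, h, s, t, Finset.mul_sum, mul_comm]
  obtain ⟨hs, ht⟩ := eq_zero_of_dvd_of_abs_add_abs_lt (d := d) (by exact_mod_cast hd)
    (by exact_mod_cast hd3) (by exact_mod_cast hn) hdvd (by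
      have : ((wt u + wt v : ℕ) : ℤ) < d := by exact_mod_cast hlt
      push_cast at this
      omega)
  rw [← hu2, ← hv2, hs, ht]
  simp

/-- For the `[[d²+1, 2, d]]` GB code (`d ≥ 3` odd, `2n = d²+1`,
`a = 1+x`, `b = (1+x)·P_d(x)`), with `u = 1 + x^d + ⋯ + x^{d((d−1)/2−1)}` and
`v = x^{n−(d+1)/2} + ⋯ + x^{n−1}`:
(i) `(u, v) ∈ C₁ \ C₂` with weight `d`;
(ii) `(x·v(x^d), u(x^d)) ∈ C₁ \ C₂` with weight `d` (where `x ↦ x^d` is the ring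
endomorphism `substHom n d`);
(iii) `(u,v) + (x·v(x^d), u(x^d)) ∉ C₂`, so (i) and (ii) are distinct logical classes;
(iv) `(1, P_d(x)) ∈ C₁ \ C₂` with weight `d+1`.
Moreover every element of `C₁ \ C₂` has weight at least `d`. -/
theorem stmt_8 (d n : ℕ) (hd : Odd d) (hd3 : 3 ≤ d) (hn : 2 * n = d ^ 2 + 1)
    (a b u v : R2 n) (ha : a = 1 + xR n) (hb : b = (1 + xR n) * PmR n d)
    (hu : u = ∑ i ∈ Finset.range ((d - 1) / 2), xR n ^ (d * i))
    (hv : v = ∑ i ∈ Finset.Ico (n - (d + 1) / 2) n, xR n ^ i) :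
    ((u, v) ∈ C1set n a b \ C2set n a b ∧ wt u + wt v = d) ∧
    ((xR n * substHom n d v, substHom n d u) ∈ C1set n a b \ C2set n a b ∧
      wt (xR n * substHom n d v) + wt (substHom n d u) = d) ∧
    (u, v) + (xR n * substHom n d v, substHom n d u) ∉ C2set n a b ∧
    (((1 : R2 n), PmR n d) ∈ C1set n a b \ C2set n a b ∧
      wt (1 : R2 n) + wt (PmR n d) = d + 1) ∧
    ∀ p ∈ C1set n a b \ C2set n a b, d ≤ wt p.1 + wt p.2 := by
  subst ha hb
  obtain ⟨m, rfl⟩ := hd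
  have hm : 1 ≤ m := by omega
  have hnm : n = (2 * m + 1) * m + (m + 1) := by nlinarith
  have hn0 : n ≠ 0 := by omega
  have hnodd : Odd n := ⟨m * m + m, by rw [hnm]; ring⟩
  have hdn : 2 * m + 1 < n := by nlinarith
  have hmem : ∀ p q : R2 n, (p, q) ∈ C1set n (1 + xR n) ((1 + xR n) * PmR n (2 * m + 1)) ↔
      p * (1 + xR n ^ (2 * m + 1)) + q * (1 + xR n) = 0 := fun p q => by
    rw [← mul_PmR]; rfl
  have hcop : Nat.Coprime n (2 * m + 1) := by
    have h1 : Nat.gcd n (2 * m + 1) ∣ 1 := by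
      rw [← Nat.dvd_add_right (((Nat.gcd_dvd_right n (2 * m + 1)).mul_right (2 * m + 1)))]
      rw [show (2 * m + 1) * (2 * m + 1) + 1 = n * 2 by rw [mul_comm n, hn]; ring]
      exact (Nat.gcd_dvd_left _ _).mul_right 2
    exact Nat.eq_one_of_dvd_one h1
  rw [show (2 * m + 1 - 1) / 2 = m by omega] at hu
  rw [show (2 * m + 1 + 1) / 2 = m + 1 by omega,
    show n - (m + 1) = (2 * m + 1) * m by omega] at hv
  have hxinv : xR n * (xR n ^ (2 * m + 1)) ^ (2 * m + 1) = 1 := by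
    rw [← pow_mul, ← pow_succ', show (2 * m + 1) * (2 * m + 1) + 1 = n * 2 by
      rw [mul_comm n, hn]; ring, pow_mul, xR_pow_n, one_pow]
  have htwo := two_eq_zero_R2 n
  have hC1 : u * (1 + xR n ^ (2 * m + 1)) + v * (1 + xR n) = 0 := by
    have h1 := geom_sum_mul (xR n ^ (2 * m + 1)) m
    simp only [← pow_mul] at h1
    rw [← hu] at h1
    have h2 := geom_sum_Ico_mul (xR n) (show (2 * m + 1) * m ≤ n by omega)
    rw [← hv, xR_pow_n] at h2
    linear_combination h1 + h2 + (u + v) * htwo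
  have hC1' := congrArg (substHom n (2 * m + 1)) hC1
  simp only [map_add, map_mul, map_one, map_pow, substHom_xR, map_zero] at hC1'
  have hwu : wt u = m := by
    rw [hu, wt_sum_xR_pow hn0, Finset.card_range]
    intro i hi j hj hij
    rw [Finset.coe_range, Set.mem_Iio] at hi hj
    exact Nat.ModEq.eq_of_lt_of_lt (Nat.ModEq.cancel_left_of_coprime hcop hij)
      (by nlinarith) (by nlinarith)
  have hwv : wt v = m + 1 := by
    rw [hv, wt_sum_xR_pow hn0 _ (fun i => i), Nat.card_Ico]
    · omega
    intro i hi j hj hij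
    rw [Finset.coe_Ico, Set.mem_Ico] at hi hj
    exact Nat.ModEq.eq_of_lt_of_lt hij hi.2 hj.2
  have hwu' : wt (substHom n (2 * m + 1) u) = m := by
    rw [hu]
    simp only [map_sum, map_pow, substHom_xR, ← pow_mul]
    rw [wt_sum_xR_pow hn0, Finset.card_range]
    intro i hi j hj hij
    rw [Finset.coe_range, Set.mem_Iio] at hi hj
    exact Nat.ModEq.eq_of_lt_of_lt (Nat.ModEq.cancel_left_of_coprime hcop
      (Nat.ModEq.cancel_left_of_coprime hcop hij)) (by nlinarith) (by nlinarith)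
  have hwv' : wt (xR n * substHom n (2 * m + 1) v) = m + 1 := by
    rw [hv]
    simp only [map_sum, map_pow, substHom_xR, ← pow_mul, Finset.mul_sum, ← pow_succ']
    rw [wt_sum_xR_pow hn0, Nat.card_Ico]
    · omega
    intro i hi j hj hij
    rw [Finset.coe_Ico, Set.mem_Ico] at hi hj
    exact Nat.ModEq.eq_of_lt_of_lt (Nat.ModEq.cancel_left_of_coprime hcop
      (Nat.ModEq.add_right_cancel' 1 hij)) hi.2 hj.2
  have hone : (1 : R2 n) = ∑ i ∈ Finset.range 1, xR n ^ i := by simp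
  have hw1 : wt (1 : R2 n) = 1 := by
    rw [hone, wt_sum_xR_pow hn0 _ (fun i => i) (by simp), Finset.card_range]
  have hwP : wt (PmR n (2 * m + 1)) = 2 * m + 1 := by
    rw [PmR, wt_sum_xR_pow hn0 _ (fun i => i), Finset.card_range]
    intro i hi j hj hij
    rw [Finset.coe_range, Set.mem_Iio] at hi hj
    exact Nat.ModEq.eq_of_lt_of_lt hij (by omega) (by omega)
  have hau : augR n u = m := by rw [augR_eq_wt hn0, hwu]
  have hav : augR n v = m + 1 := by rw [augR_eq_wt hn0, hwv]; simp
  refine ⟨⟨⟨(hmem _ _).2 hC1, fun h => ?_⟩, by omega⟩,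
    ⟨⟨(hmem _ _).2 ?_, fun h => ?_⟩, by omega⟩, fun h => ?_,
    ⟨⟨(hmem _ _).2 ?_, fun h => ?_⟩, by omega⟩, ?_⟩
  · obtain ⟨h1, h2⟩ := augR_eq_zero_of_mem_C2set h
    rw [hau] at h1
    rw [hav, h1] at h2
    simp at h2
  · linear_combination xR n * hC1' - substHom n (2 * m + 1) u * hxinv
  · obtain ⟨h1, h2⟩ := augR_eq_zero_of_mem_C2set h
    rw [map_mul, augR_xR, one_mul, augR_substHom, hav] at h1
    rw [augR_substHom, hau] at h2
    simp [h2] at h1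
  · obtain ⟨h1, -⟩ := augR_eq_zero_of_mem_C2set h
    simp only [Prod.mk_add_mk, map_add, map_mul, augR_xR, augR_substHom, hau, hav] at h1
    have h2 := CharTwo.add_self_eq_zero (m : ZMod 2)
    exact one_ne_zero (α := ZMod 2) (by linear_combination h1 - h2)
  · rw [← mul_PmR]
    linear_combination (1 + xR n) * PmR n (2 * m + 1) * htwo
  · obtain ⟨h1, -⟩ := augR_eq_zero_of_mem_C2set h
    simp at h1
  · rintro ⟨p, q⟩ ⟨hp1, hp2⟩
    by_contra! hlt
    obtain ⟨h1, h2⟩ := augR_eq_zero_of_wt_lt ⟨m, rfl⟩ hd3 hn ((hmem p q).1 hp1) hlt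
    exact hp2 (mem_C2set_of_augR_eq_zero hnodd hp1 h1 h2)

end
end
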